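/- arXiv:0709.0436 — 2 statements merged into one kernel-verified Lean document; each statement's English description precedes it below -/
import Mathlib

section
/- Let n, c, α, β, γ, δ be real numbers with c ≠ 0, β ≠ 0 and αδ + c = 0, and let α₁, α₂, β₁, δ₁, δ₂, X₃ be real numbers satisfying: δ₁ + βX₃ = 0, δ₂ + (γ − δ)X₃ = 0, α₁δ + αδ₁ = 0, α₂δ + αδ₂ = 0, α₂ = β₁, and ββ₁ = 2nαα₁. Then (γ − δ − 2nα)α₁ = 0 and (γ − δ − 2nα)β₁ = 0. -/
/-!
Eliminating `X₃` from the two equations for `δ₁` and `δ₂` gives `(γ - δ) δ₁ = β δ₂`. Since `αδ` is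
constant, `α δ₁ = -δ α₁` and `α δ₂ = -δ α₂`, so multiplying by `α` and cancelling `δ` gives
`(γ - δ) α₁ = β α₂`. The right-hand side is `β β₁ = 2nα α₁`, which is the first claim. Multiplied by
`2nα`, the first claim becomes the second one times `β`.
-/

section CommRing

variable {R : Type*} [CommRing R]

theorem mul_eq_mul_of_add_mul_eq_zero {a b p q x : R}
    (ha : a + p * x = 0) (hb : b + q * x = 0) : q * a = p * b := by
  linear_combination q * ha - p * hb

theorem mul_eq_mul_of_product_rule {α δ α₁ α₂ δ₁ δ₂ p q : R} (hδ : IsRegular δ)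
    (hprod₁ : α₁ * δ + α * δ₁ = 0) (hprod₂ : α₂ * δ + α * δ₂ = 0) (h : p * δ₁ = q * δ₂) :
    p * α₁ = q * α₂ := by
  apply hδ.left
  linear_combination p * hprod₁ - q * hprod₂ - α * h

theorem mul_eq_zero_of_isRegular_mul_eq_mul {a b k m r : R} (hr : IsRegular r)
    (hab : r * b = m * a) (ha : k * a = 0) : k * b = 0 := by
  apply hr.left
  linear_combination k * hab + m * ha

/-- Regular elements of a commutative ring, rather than nonzero reals, allow the symbols to be
read as functions on the hypersurface as well as their values at a point. -/
theorem stmt4_general {n α β γ δ α₁ α₂ β₁ δ₁ δ₂ X₃ : R}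
    (hβ : IsRegular β) (hδ : IsRegular δ)
    (h1 : δ₁ + β * X₃ = 0)
    (h2 : δ₂ + (γ - δ) * X₃ = 0)
    (h3 : α₁ * δ + α * δ₁ = 0)
    (h4 : α₂ * δ + α * δ₂ = 0)
    (h5 : α₂ = β₁)
    (h6 : β * β₁ = 2 * n * α * α₁) :
    (γ - δ - 2 * n * α) * α₁ = 0 ∧ (γ - δ - 2 * n * α) * β₁ = 0 := by
  have hδ₁₂ : (γ - δ) * δ₁ = β * δ₂ := mul_eq_mul_of_add_mul_eq_zero h1 h2
  have hα₁₂ : (γ - δ) * α₁ = β * α₂ := mul_eq_mul_of_product_rule hδ h3 h4 hδ₁₂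
  have hα₁ : (γ - δ - 2 * n * α) * α₁ = 0 := by
    rw [sub_mul, hα₁₂, h5, h6, sub_self]
  exact ⟨hα₁, mul_eq_zero_of_isRegular_mul_eq_mul hβ h6 hα₁⟩

end CommRing

theorem stmt4 (n c α β γ δ α₁ α₂ β₁ δ₁ δ₂ X₃ : ℝ)
    (hc : c ≠ 0) (hβ : β ≠ 0) (hαδ : α * δ + c = 0)
    (h1 : δ₁ + β * X₃ = 0)
    (h2 : δ₂ + (γ - δ) * X₃ = 0)
    (h3 : α₁ * δ + α * δ₁ = 0)
    (h4 : α₂ * δ + α * δ₂ = 0)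
    (h5 : α₂ = β₁)
    (h6 : β * β₁ = 2 * n * α * α₁) :
    (γ - δ - 2 * n * α) * α₁ = 0 ∧ (γ - δ - 2 * n * α) * β₁ = 0 := by
  have hδ : δ ≠ 0 := right_ne_zero_of_mul (eq_neg_of_add_eq_zero_left hαδ ▸ neg_ne_zero.mpr hc)
  exact stmt4_general (.of_ne_zero hβ) (.of_ne_zero hδ) h1 h2 h3 h4 h5 h6
end

section
/- Let α, γ, δ, c, X₁ be real numbers with c ≠ 0, αδ + c = 0, (α − δ)γ + (γ − δ)X₁ = 0, (γ − α)δ + (γ − δ)X₁ = 0, and (αγ + c)X₁ = 0. Then γ = δ and α = γ; that is, α = γ = δ. -/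
/-!
Since `c = -α * δ`, the relation `(α * γ + c) * X₁ = 0` reads `α * (γ - δ) * X₁ = 0`, and `α ≠ 0`
because `c ≠ 0`. Hence the common term `(γ - δ) * X₁` drops out of the other two relations, so
there is no need to split into the cases `γ = δ` and `α + 2 * X₁ = 0` suggested by their sum.
-/

section NoZeroDivisors

variable {R : Type*} [NonUnitalRing R] [NoZeroDivisors R] {α γ δ c x : R}

theorem sub_mul_eq_zero_of_mul_add_eq_zero (hα : α ≠ 0) (hδ : α * δ + c = 0)
    (hγ : (α * γ + c) * x = 0) : (γ - δ) * x = 0 := by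
  have hc : c = -(α * δ) := eq_neg_of_add_eq_zero_right hδ
  rw [hc, ← sub_eq_add_neg, ← mul_sub, mul_assoc] at hγ
  exact (mul_eq_zero.mp hγ).resolve_left hα

theorem eq_and_eq_of_sub_mul_eq_zero (hα : α ≠ 0) (hδ : δ ≠ 0)
    (hαδ : (α - δ) * γ = 0) (hγα : (γ - α) * δ = 0) : γ = δ ∧ α = γ := by
  obtain rfl : γ = α := sub_eq_zero.mp ((mul_eq_zero.mp hγα).resolve_right hδ)
  exact ⟨sub_eq_zero.mp ((mul_eq_zero.mp hαδ).resolve_right hα), rfl⟩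

theorem stmt12_general (hc : c ≠ 0) (h0 : α * δ + c = 0)
    (h1 : (α - δ) * γ + (γ - δ) * x = 0) (h2 : (γ - α) * δ + (γ - δ) * x = 0)
    (h3 : (α * γ + c) * x = 0) : γ = δ ∧ α = γ := by
  have hαδ : α * δ ≠ 0 := by
    rw [eq_neg_of_add_eq_zero_left h0]
    exact neg_ne_zero.mpr hc
  obtain ⟨hα, hδ⟩ := mul_ne_zero_iff.mp hαδ
  have hx : (γ - δ) * x = 0 := sub_mul_eq_zero_of_mul_add_eq_zero hα h0 h3
  rw [hx, add_zero] at h1 h2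
  exact eq_and_eq_of_sub_mul_eq_zero hα hδ h1 h2

end NoZeroDivisors

theorem stmt12 (α γ δ c X₁ : ℝ) (hc : c ≠ 0)
    (h0 : α * δ + c = 0)
    (h1 : (α - δ) * γ + (γ - δ) * X₁ = 0)
    (h2 : (γ - α) * δ + (γ - δ) * X₁ = 0)
    (h3 : (α * γ + c) * X₁ = 0) :
    γ = δ ∧ α = γ :=
  stmt12_general hc h0 h1 h2 h3
end
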